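/- Let τ be a symmetric 2×2 complex matrix with positive definite imaginary part and write θ[ε] for the genus-2 theta constant θ[ε](0|τ). Then the following relations between fourth powers of even theta constants hold: θ⁴[00;00] − θ⁴[00;11] = θ⁴[10;01] + θ⁴[01;00] = θ⁴[10;00] + θ⁴[01;10]; θ⁴[00;00] − θ⁴[11;00] = θ⁴[01;10] + θ⁴[00;01] = θ⁴[00;10] + θ⁴[10;01]; θ⁴[00;00] − θ⁴[11;11] = θ⁴[10;00] + θ⁴[00;10] = θ⁴[01;00] + θ⁴[00;01]. -/

import Mathlib

/-- Genus-2 Riemann theta function with characteristic `[a b; c d]`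
(`(a,b) = ε'`, `(c,d) = ε''`), evaluated at `z = (z1, z2)` and period matrix
`τ = ((t11, t12), (t12, t22))`. -/
noncomputable def theta2 (a b c d : ℝ) (z1 z2 t11 t12 t22 : ℂ) : ℂ :=
  ∑' m : ℤ × ℤ,
    Complex.exp
      ((Real.pi : ℂ) * Complex.I *
          (((m.1 : ℂ) + (a : ℂ) / 2) *
              (((m.1 : ℂ) + (a : ℂ) / 2) * t11 + ((m.2 : ℂ) + (b : ℂ) / 2) * t12) +
            ((m.2 : ℂ) + (b : ℂ) / 2) *
              (((m.1 : ℂ) + (a : ℂ) / 2) * t12 + ((m.2 : ℂ) + (b : ℂ) / 2) * t22)) +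
        2 * (Real.pi : ℂ) * Complex.I *
          (((m.1 : ℂ) + (a : ℂ) / 2) * (z1 + (c : ℂ) / 2) +
            ((m.2 : ℂ) + (b : ℂ) / 2) * (z2 + (d : ℂ) / 2)))

/-- The symmetric matrix `τ = ((t11, t12), (t12, t22))` has positive definite
imaginary part. -/
def posDefIm (t11 t12 t22 : ℂ) : Prop :=
  (!![t11.im, t12.im; t12.im, t22.im]).PosDef

noncomputable def tTerm (a b c d : ℝ) (t11 t12 t22 : ℂ) (m : ℤ × ℤ) : ℂ :=
    Complex.exp
      ((Real.pi : ℂ) * Complex.I *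
          (((m.1 : ℂ) + (a : ℂ) / 2) *
              (((m.1 : ℂ) + (a : ℂ) / 2) * t11 + ((m.2 : ℂ) + (b : ℂ) / 2) * t12) +
            ((m.2 : ℂ) + (b : ℂ) / 2) *
              (((m.1 : ℂ) + (a : ℂ) / 2) * t12 + ((m.2 : ℂ) + (b : ℂ) / 2) * t22)) +
        2 * (Real.pi : ℂ) * Complex.I *
          (((m.1 : ℂ) + (a : ℂ) / 2) * (0 + (c : ℂ) / 2) +
            ((m.2 : ℂ) + (b : ℂ) / 2) * (0 + (d : ℂ) / 2)))

lemma theta2_eq (a b c d : ℝ) (t11 t12 t22 : ℂ) :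
    theta2 a b c d 0 0 t11 t12 t22 = ∑' m, tTerm a b c d t11 t12 t22 m := rfl

lemma posDefIm_bound {t11 t12 t22 : ℂ} (h : posDefIm t11 t12 t22) :
    ∃ δ : ℝ, 0 < δ ∧ ∀ x y : ℝ, δ * (x ^ 2 + y ^ 2) ≤
      x * (x * t11.im + y * t12.im) + y * (x * t12.im + y * t22.im) := by
  unfold posDefIm at h
  have h1 : 0 < t11.im := by simpa using h.diag_pos (i := 0)
  have h2 : 0 < t22.im := by simpa using h.diag_pos (i := 1)
  have h3 : 0 < t11.im * t22.im - t12.im * t12.im := by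
    simpa [Matrix.det_fin_two] using h.det_pos
  generalize t11.im = A at *
  generalize t12.im = B at *
  generalize t22.im = C at *
  have hs : 0 < A + C := by positivity
  refine ⟨(A * C - B * B) / (A + C), by positivity, fun x y => ?_⟩
  rw [div_mul_eq_mul_div, div_le_iff₀ hs]
  nlinarith [sq_nonneg (A * x + B * y), sq_nonneg (B * x + C * y)]

lemma summable_gauss (δ : ℝ) (hδ : 0 < δ) (a : ℝ) :
    Summable (fun n : ℤ => Real.exp (-(Real.pi * (δ * ((n : ℝ) + a / 2) ^ 2)))) := by
  have h := ((summable_jacobiTheta₂_term_iff (Complex.I * (δ * a / 2 : ℝ)) (Complex.I * δ)).2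
    (by simpa using hδ)).norm
  refine (h.mul_left (Real.exp (-(Real.pi * (δ * (a / 2) ^ 2))))).congr fun n => ?_
  rw [norm_jacobiTheta₂_term, ← Real.exp_add]
  congr 1
  simp
  ring

lemma summable_tTerm (a b c d : ℝ) {t11 t12 t22 : ℂ} (h : posDefIm t11 t12 t22) :
    Summable (fun m => ‖tTerm a b c d t11 t12 t22 m‖) := by
  obtain ⟨δ, hδ, hb⟩ := posDefIm_bound h
  refine Summable.of_nonneg_of_le (fun _ => norm_nonneg _) (fun m => ?_)
    ((summable_gauss δ hδ a).mul_of_nonneg (summable_gauss δ hδ b)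
      (fun _ => (Real.exp_pos _).le) (fun _ => (Real.exp_pos _).le))
  rw [tTerm, Complex.norm_exp, ← Real.exp_add, Real.exp_le_exp]
  have := hb (m.1 + a / 2) (m.2 + b / 2)
  have e1 : (m.1 : ℂ) + (a : ℂ) / 2 = ((m.1 + a / 2 : ℝ) : ℂ) := by push_cast; ring
  have e2 : (m.2 : ℂ) + (b : ℂ) / 2 = ((m.2 + b / 2 : ℝ) : ℂ) := by push_cast; ring
  have e3 : (0 : ℂ) + (c : ℂ) / 2 = ((c / 2 : ℝ) : ℂ) := by push_cast; ring
  have e4 : (0 : ℂ) + (d : ℂ) / 2 = ((d / 2 : ℝ) : ℂ) := by push_cast; ring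
  rw [e1, e2, e3, e4]
  generalize (m.1 + a / 2 : ℝ) = x at *
  generalize (m.2 + b / 2 : ℝ) = y at *
  have := mul_le_mul_of_nonneg_left this Real.pi_pos.le
  simp [Complex.add_re, Complex.mul_re]
  linarith

noncomputable def reindex : (Fin 2 × Fin 2) × ((ℤ × ℤ) × (ℤ × ℤ)) ≃ (ℤ × ℤ) × (ℤ × ℤ) :=
  Equiv.ofBijective
    (fun x => ((x.2.1.1 + x.2.2.1 + (x.1.1 : ℕ), x.2.1.2 + x.2.2.2 + (x.1.2 : ℕ)),
      (x.2.1.1 - x.2.2.1, x.2.1.2 - x.2.2.2))) (by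
    constructor
    · rintro ⟨⟨s1, s2⟩, ⟨p1, p2⟩, ⟨q1, q2⟩⟩ ⟨⟨s1', s2'⟩, ⟨p1', p2'⟩, ⟨q1', q2'⟩⟩ h
      simp only [Prod.mk.injEq] at h ⊢
      refine ⟨⟨?_, ?_⟩, ⟨?_, ?_⟩, ?_, ?_⟩ <;> omega
    · rintro ⟨⟨m1, m2⟩, ⟨n1, n2⟩⟩
      refine ⟨⟨⟨⟨((m1 + n1) % 2).toNat, by omega⟩, ⟨((m2 + n2) % 2).toNat, by omega⟩⟩,
        ⟨(m1 + n1) / 2, (m2 + n2) / 2⟩, ⟨(m1 + n1) / 2 - n1, (m2 + n2) / 2 - n2⟩⟩, ?_⟩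
      simp only [Prod.mk.injEq]
      refine ⟨⟨?_, ?_⟩, ?_, ?_⟩ <;> omega)

lemma tTerm_mul (a b c d s1 s2 : ℕ) (t11 t12 t22 : ℂ) (p q : ℤ × ℤ) :
    tTerm a b c d t11 t12 t22 (p.1 + q.1 + s1, p.2 + q.2 + s2) *
      tTerm a b c d t11 t12 t22 (p.1 - q.1, p.2 - q.2) =
    (-1) ^ ((s1 + a) * c + (s2 + b) * d) *
      (tTerm ((s1 + a : ℕ) : ℝ) ((s2 + b : ℕ) : ℝ) 0 0 (2 * t11) (2 * t12) (2 * t22) p *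
        tTerm s1 s2 0 0 (2 * t11) (2 * t12) (2 * t22) q) := by
  rw [← Complex.exp_pi_mul_I, ← Complex.exp_nat_mul]
  simp only [tTerm, ← Complex.exp_add]
  conv_rhs => rw [← mul_one (Complex.exp _),
    ← Complex.exp_int_mul_two_pi_mul_I (p.1 * c + p.2 * d), ← Complex.exp_add]
  congr 1
  push_cast
  ring

lemma posDefIm_two {t11 t12 t22 : ℂ} (h : posDefIm t11 t12 t22) :
    posDefIm (2 * t11) (2 * t12) (2 * t22) := by
  unfold posDefIm at *
  have := h.smul (show (0 : ℝ) < 2 by norm_num)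
  convert this using 1
  ext i j
  fin_cases i <;> fin_cases j <;> simp

lemma theta2_sq (a b c d : ℕ) {t11 t12 t22 : ℂ} (h : posDefIm t11 t12 t22) :
    theta2 a b c d 0 0 t11 t12 t22 ^ 2 = ∑ s : Fin 2 × Fin 2,
      (-1) ^ (((s.1 : ℕ) + a) * c + ((s.2 : ℕ) + b) * d) *
      (theta2 (((s.1 : ℕ) + a : ℕ) : ℝ) (((s.2 : ℕ) + b : ℕ) : ℝ) 0 0 0 0
          (2 * t11) (2 * t12) (2 * t22) *
        theta2 ((s.1 : ℕ) : ℝ) ((s.2 : ℕ) : ℝ) 0 0 0 0 (2 * t11) (2 * t12) (2 * t22)) := by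
  have hs := summable_tTerm a b c d h
  have h2 := posDefIm_two h
  have hs2 := summable_mul_of_summable_norm hs hs
  simp only [theta2_eq]
  rw [sq, tsum_mul_tsum_of_summable_norm hs hs, ← reindex.tsum_eq]
  refine (Summable.tsum_prod ((reindex.summable_iff).2 hs2)).trans ?_
  rw [tsum_fintype]
  refine Finset.sum_congr rfl fun s _ => ?_
  rw [tsum_mul_tsum_of_summable_norm (summable_tTerm _ _ _ _ h2) (summable_tTerm _ _ _ _ h2),
    ← tsum_mul_left]
  exact tsum_congr fun x => tTerm_mul a b c d s.1 s.2 t11 t12 t22 x.1 x.2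

lemma theta2_shift1 (b t11 t12 t22) :
    theta2 2 b 0 0 0 0 t11 t12 t22 = theta2 0 b 0 0 0 0 t11 t12 t22 := by
  simp only [theta2_eq]
  rw [← ((Equiv.addRight (1 : ℤ)).prodCongr (Equiv.refl ℤ)).tsum_eq (tTerm 0 b 0 0 t11 t12 t22)]
  refine tsum_congr fun m => ?_
  simp [tTerm]

lemma theta2_shift2 (a t11 t12 t22) :
    theta2 a 2 0 0 0 0 t11 t12 t22 = theta2 a 0 0 0 0 0 t11 t12 t22 := by
  simp only [theta2_eq]
  rw [← ((Equiv.refl ℤ).prodCongr (Equiv.addRight (1 : ℤ))).tsum_eq (tTerm a 0 0 0 t11 t12 t22)]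
  refine tsum_congr fun m => ?_
  simp [tTerm]

/-- **Relations between fourth powers of even genus-2 theta constants.**
Writing `θ[ε] = θ[ε](0|τ)`:
`θ⁴[00;00] − θ⁴[00;11] = θ⁴[10;01] + θ⁴[01;00] = θ⁴[10;00] + θ⁴[01;10]`;
`θ⁴[00;00] − θ⁴[11;00] = θ⁴[01;10] + θ⁴[00;01] = θ⁴[00;10] + θ⁴[10;01]`;
`θ⁴[00;00] − θ⁴[11;11] = θ⁴[10;00] + θ⁴[00;10] = θ⁴[01;00] + θ⁴[00;01]`. -/
theorem theta_constants_fourth_powers (t11 t12 t22 : ℂ) (hτ : posDefIm t11 t12 t22) :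
    (theta2 0 0 0 0 0 0 t11 t12 t22 ^ 4 - theta2 0 0 1 1 0 0 t11 t12 t22 ^ 4 =
        theta2 1 0 0 1 0 0 t11 t12 t22 ^ 4 + theta2 0 1 0 0 0 0 t11 t12 t22 ^ 4 ∧
      theta2 0 0 0 0 0 0 t11 t12 t22 ^ 4 - theta2 0 0 1 1 0 0 t11 t12 t22 ^ 4 =
        theta2 1 0 0 0 0 0 t11 t12 t22 ^ 4 + theta2 0 1 1 0 0 0 t11 t12 t22 ^ 4) ∧
    (theta2 0 0 0 0 0 0 t11 t12 t22 ^ 4 - theta2 1 1 0 0 0 0 t11 t12 t22 ^ 4 =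
        theta2 0 1 1 0 0 0 t11 t12 t22 ^ 4 + theta2 0 0 0 1 0 0 t11 t12 t22 ^ 4 ∧
      theta2 0 0 0 0 0 0 t11 t12 t22 ^ 4 - theta2 1 1 0 0 0 0 t11 t12 t22 ^ 4 =
        theta2 0 0 1 0 0 0 t11 t12 t22 ^ 4 + theta2 1 0 0 1 0 0 t11 t12 t22 ^ 4) ∧
    (theta2 0 0 0 0 0 0 t11 t12 t22 ^ 4 - theta2 1 1 1 1 0 0 t11 t12 t22 ^ 4 =
        theta2 1 0 0 0 0 0 t11 t12 t22 ^ 4 + theta2 0 0 1 0 0 0 t11 t12 t22 ^ 4 ∧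
      theta2 0 0 0 0 0 0 t11 t12 t22 ^ 4 - theta2 1 1 1 1 0 0 t11 t12 t22 ^ 4 =
        theta2 0 1 0 0 0 0 t11 t12 t22 ^ 4 + theta2 0 0 0 1 0 0 t11 t12 t22 ^ 4) := by
  have key := fun a b c d : ℕ => theta2_sq a b c d hτ
  have k0000 := key 0 0 0 0
  have k0011 := key 0 0 1 1
  have k0010 := key 0 0 1 0
  have k0001 := key 0 0 0 1
  have k1000 := key 1 0 0 0
  have k1001 := key 1 0 0 1
  have k0100 := key 0 1 0 0
  have k0110 := key 0 1 1 0
  have k1100 := key 1 1 0 0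
  have k1111 := key 1 1 1 1
  clear key
  simp [Fintype.sum_prod_type, Fin.sum_univ_two, theta2_shift1, theta2_shift2, one_add_one_eq_two]
    at k0000 k0011 k0010 k0001 k1000 k1001 k0100 k0110 k1100 k1111
  have e : ∀ x : ℂ, x ^ 4 = (x ^ 2) ^ 2 := fun x => by ring
  simp only [e, k0000, k0011, k0010, k0001, k1000, k1001, k0100, k0110, k1100, k1111]
  refine ⟨⟨?_, ?_⟩, ⟨?_, ?_⟩, ?_, ?_⟩ <;> ring
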